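/- Suppose g : ℕ → ℂ is multiplicative and satisfies Condition (A) for some complex number κ and Condition (B). For real s ≥ 0 define P(s) = ∏_p (1 − p^{−s−1})^κ (1 + g(p)/p^{s+1} + g(p²)/p^{2(s+1)} + ⋯), with principal-branch complex powers. Then P(s) converges for every s ≥ 0 and lim_{s → 0⁺} P(s) = P(0) = ∏_p (1 − 1/p)^κ (1 + g(p)/p + g(p²)/p² + ⋯). -/

import Mathlib

open Filter Finset
open scoped ENNReal NNReal

/-- `g` is multiplicative: `g 1 = 1` and `g (m*n) = g m * g n` for coprime `m, n`. -/
def IsMult (g : ℕ → ℂ) : Prop :=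
  g 1 = 1 ∧ ∀ m n : ℕ, Nat.Coprime m n → g (m * n) = g m * g n

/-- `M_g(x) = ∑_{n ≤ x} g(n)/n`. -/
noncomputable def Mg (g : ℕ → ℂ) (x : ℝ) : ℂ :=
  ∑ n ∈ Finset.Icc 1 ⌊x⌋₊, g n / (n : ℂ)

/-- The finite set of primes `p ≤ x`. -/
noncomputable def primesLE (x : ℝ) : Finset ℕ :=
  (Finset.range (⌊x⌋₊ + 1)).filter Nat.Prime

/-- Condition (A): `∑_{p ≤ x} g(p) log p / p = κ log x + O(1)` for all `x ≥ 2`. -/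
def CondA (g : ℕ → ℂ) (κ : ℂ) : Prop :=
  ∃ C : ℝ, ∀ x : ℝ, 2 ≤ x →
    ‖(∑ p ∈ primesLE x, g p * (Real.log p : ℂ) / (p : ℂ)) - κ * (Real.log x : ℂ)‖ ≤ C

/-- Condition (B):
`∑_p (|g(p)| log p / p) ∑_{r≥1} |g(p^r)|/p^r + ∑_p ∑_{r≥2} |g(p^r)| log(p^r)/p^r < ∞`. -/
def CondB (g : ℕ → ℂ) : Prop :=
  (∑' p : Nat.Primes,
      ((‖g (p : ℕ)‖₊ : ℝ≥0∞) * ENNReal.ofReal (Real.log (p : ℕ)) / ((p : ℕ) : ℝ≥0∞)) *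
        ∑' r : ℕ, (‖g ((p : ℕ) ^ (r + 1))‖₊ : ℝ≥0∞) / (((p : ℕ) ^ (r + 1) : ℕ) : ℝ≥0∞))
    + (∑' p : Nat.Primes, ∑' r : ℕ,
        (‖g ((p : ℕ) ^ (r + 2))‖₊ : ℝ≥0∞) *
          ENNReal.ofReal (Real.log ((p : ℕ) ^ (r + 2) : ℕ)) /
          (((p : ℕ) ^ (r + 2) : ℕ) : ℝ≥0∞)) < ⊤

/-- Condition (C): `∏_{p ≤ x} (1 + |g(p)|/p) ≪ (log x)^β` for all `x ≥ 2`. -/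
def CondC (g : ℕ → ℂ) (β : ℝ) : Prop :=
  ∃ C : ℝ, ∀ x : ℝ, 2 ≤ x →
    ∏ p ∈ primesLE x, (1 + ‖g p‖ / (p : ℝ)) ≤ C * Real.log x ^ β

/-- The Euler factor `(1 - 1/p)^κ (1 + g(p)/p + g(p²)/p² + ⋯)` (principal branch power). -/
noncomputable def eulerFactor (g : ℕ → ℂ) (κ : ℂ) (p : ℕ) : ℂ :=
  (1 - 1 / (p : ℂ)) ^ κ * ∑' r : ℕ, g (p ^ r) / (p : ℂ) ^ r

/-- The Euler factor at `s`: `(1 - p^{-s-1})^κ (1 + g(p)/p^{s+1} + g(p²)/p^{2(s+1)} + ⋯)`,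
with principal-branch complex power. -/
noncomputable def eulerFactorS (g : ℕ → ℂ) (κ : ℂ) (s : ℝ) (p : ℕ) : ℂ :=
  ((1 - (((p : ℝ) ^ (-s - 1) : ℝ) : ℂ)) ^ κ) *
    ∑' r : ℕ, g (p ^ r) / (((((p : ℝ) ^ (s + 1) : ℝ)) ^ r : ℝ) : ℂ)

/-!
With `z = p^{-s-1}`, write the Euler factor as
`((1 - z)^κ e^{κz}) · (e^{-g(p)z} ∑ g(p^r) z^r) · e^{(g(p) - κ)z}`. The first two factors are
`1 + O(p^{-2})` and `1 + O(|g(p)|² p^{-2} + ∑_{r ≥ 2} |g(p^r)| p^{-r})`, uniformly in `s ≥ 0`, so by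
dominated convergence their products converge to continuous functions of `s`. For the third, `(A)`
and Mertens' first theorem say that `∑_{p ≤ x} (g(p) - κ) log p / p` is bounded, so by partial
summation against `p^{-s} / log p` the series `∑_p (g(p) - κ) p^{-s-1}` converges uniformly in
`s ≥ 0`.
-/

open scoped Topology Nat ArithmeticFunction.vonMangoldt Chebyshev

section ContinuousLimit

variable {X Y : Type*} [TopologicalSpace X]

/-- The sequence of functions `F` converges pointwise on `S` to a function that is continuous on
`S`; this is the form in which convergence and continuity of the Euler product are established. -/
def HasContinuousLimitOn [TopologicalSpace Y] (F : ℕ → X → Y) (S : Set X) : Prop :=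
  ∃ G : X → Y, ContinuousOn G S ∧ ∀ x ∈ S, Tendsto (F · x) atTop (𝓝 (G x))

namespace HasContinuousLimitOn

variable {S : Set X}

lemma exists_tendsto [TopologicalSpace Y] {F : ℕ → X → Y} (hF : HasContinuousLimitOn F S) {x : X}
    (hx : x ∈ S) : ∃ y, Tendsto (F · x) atTop (𝓝 y) :=
  let ⟨_, _, hG⟩ := hF
  ⟨_, hG x hx⟩

lemma continuousOn_of_tendsto [TopologicalSpace Y] [T2Space Y] {F : ℕ → X → Y}
    (hF : HasContinuousLimitOn F S) {P : X → Y}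
    (hP : ∀ x ∈ S, Tendsto (F · x) atTop (𝓝 (P x))) : ContinuousOn P S := by
  obtain ⟨G, hGc, hG⟩ := hF
  exact hGc.congr fun x hx => tendsto_nhds_unique (hP x hx) (hG x hx)

lemma mul [TopologicalSpace Y] [Mul Y] [ContinuousMul Y] {F G : ℕ → X → Y}
    (hF : HasContinuousLimitOn F S) (hG : HasContinuousLimitOn G S) :
    HasContinuousLimitOn (fun n x => F n x * G n x) S := by
  obtain ⟨f, hfc, hf⟩ := hF
  obtain ⟨g, hgc, hg⟩ := hG
  exact ⟨_, hfc.mul hgc, fun x hx => (hf x hx).mul (hg x hx)⟩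

lemma cexp {F : ℕ → X → ℂ} (hF : HasContinuousLimitOn F S) :
    HasContinuousLimitOn (fun n x => Complex.exp (F n x)) S := by
  obtain ⟨f, hfc, hf⟩ := hF
  exact ⟨_, hfc.cexp, fun x hx => (hf x hx).cexp⟩

lemma of_uniformCauchySeqOn [UniformSpace Y] [CompleteSpace Y] {F : ℕ → X → Y}
    (hF : UniformCauchySeqOn F atTop S) (hc : ∀ n, ContinuousOn (F n) S) :
    HasContinuousLimitOn F S := by
  have hlim : ∀ x, ∃ y, x ∈ S → Tendsto (F · x) atTop (𝓝 y) := fun x => by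
    by_cases hx : x ∈ S
    · exact (cauchySeq_tendsto_of_complete (hF.cauchySeq hx)).imp fun _ hy _ => hy
    · exact ⟨F 0 x, fun h => absurd h hx⟩
  choose G hG using hlim
  exact ⟨G, (hF.tendstoUniformlyOn_of_tendsto hG).continuousOn (Frequently.of_forall hc), hG⟩

lemma prod_primes {R : Type*} [NormedCommRing R] [NormOneClass R] [CompleteSpace R]
    {f : ℕ → X → R} {u : ℕ → ℝ} (hu : Summable fun p : Nat.Primes => u p)
    (hf : ∀ p, p.Prime → ContinuousOn (f p) S)
    (hfu : ∀ p, p.Prime → ∀ x ∈ S, ‖f p x - 1‖ ≤ u p) :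
    HasContinuousLimitOn (fun N x => ∏ p ∈ range N with p.Prime, f p x) S := by
  refine ⟨fun x => ∏' p : Nat.Primes, (1 + (f p x - 1)), fun x hx => ?_, fun x hx => ?_⟩
  · refine tendsto_tprod_one_add_of_dominated_convergence hu
      (fun p => ((hf p p.2).sub continuousOn_const) x hx) ?_
    filter_upwards [self_mem_nhdsWithin] with y hy p using hfu p p.2 y hy
  · have hmult : Multipliable fun p : Nat.Primes => 1 + (f p x - 1) :=
      multipliable_one_add_of_summable (hu.of_nonneg_of_le (fun _ => norm_nonneg _)
        fun p => hfu p p.2 x hx)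
    have hprod := hmult.hasProd
    simp only [add_sub_cancel] at hprod ⊢
    refine ((hasProd_subtype_iff_mulIndicator (f := (f · x))
      (s := {p : ℕ | p.Prime})).1 hprod).tendsto_prod_nat.congr fun N => ?_
    simp only [prod_filter, Set.mulIndicator_apply, Set.mem_ofPred_eq]

end HasContinuousLimitOn

end ContinuousLimit

section DirichletTest

variable {E : Type*} [NormedAddCommGroup E] [NormedSpace ℝ E] {b : ℕ → ℝ} {c : ℕ → E} {C : ℝ}

lemma norm_sum_range_smul_le_of_antitone (hb : Antitone b) (hb0 : ∀ n, 0 ≤ b n)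
    (hc : ∀ n, ‖∑ i ∈ range n, c i‖ ≤ C) (n : ℕ) :
    ‖∑ i ∈ range n, b i • c i‖ ≤ C * b 0 := by
  have hstep : ∀ i, ‖(b (i + 1) - b i) • ∑ j ∈ range (i + 1), c j‖ ≤ (b i - b (i + 1)) * C := by
    intro i
    rw [norm_smul, Real.norm_eq_abs, abs_sub_comm, abs_of_nonneg (sub_nonneg.2 (hb i.le_succ))]
    exact mul_le_mul_of_nonneg_left (hc _) (sub_nonneg.2 (hb i.le_succ))
  rw [sum_range_by_parts]
  calc ‖b (n - 1) • ∑ i ∈ range n, c i -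
          ∑ i ∈ range (n - 1), (b (i + 1) - b i) • ∑ j ∈ range (i + 1), c j‖
      ≤ b (n - 1) * C + ∑ i ∈ range (n - 1), (b i - b (i + 1)) * C := by
        refine norm_sub_le_of_le ?_ (norm_sum_le_of_le _ fun i _ => hstep i)
        rw [norm_smul, Real.norm_of_nonneg (hb0 _)]
        exact mul_le_mul_of_nonneg_left (hc n) (hb0 _)
    _ = C * b 0 := by rw [← sum_mul, sum_range_sub']; ring

lemma norm_sum_Ico_smul_le_of_antitone (hb : Antitone b) (hb0 : ∀ n, 0 ≤ b n)
    (hc : ∀ n, ‖∑ i ∈ range n, c i‖ ≤ C) (m n : ℕ) :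
    ‖∑ i ∈ Ico m n, b i • c i‖ ≤ 2 * C * b m := by
  have htail : ∀ k, ‖∑ i ∈ range k, c (m + i)‖ ≤ 2 * C := fun k => by
    rw [← sum_range_add_sub_sum_range, two_mul]
    exact norm_sub_le_of_le (hc _) (hc _)
  rw [sum_Ico_eq_sum_range]
  exact norm_sum_range_smul_le_of_antitone (b := fun i => b (m + i))
    (fun i j hij => hb (by gcongr)) (fun i => hb0 _) htail (n - m)

theorem uniformCauchySeqOn_sum_smul_of_antitone {X : Type*} {S : Set X} {b : ℕ → X → ℝ}
    (hb : ∀ x ∈ S, Antitone (b · x)) (hb0 : TendstoUniformlyOn b 0 atTop S)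
    (hc : ∀ n, ‖∑ i ∈ range n, c i‖ ≤ C) :
    UniformCauchySeqOn (fun n x => ∑ i ∈ range n, b i x • c i) atTop S := by
  have hC : 0 ≤ C := (norm_nonneg _).trans (hc 0)
  have hnonneg : ∀ x ∈ S, ∀ n, 0 ≤ b n x := fun x hx n =>
    (hb x hx).le_of_tendsto (hb0.tendsto_at hx) n
  rw [Metric.uniformCauchySeqOn_iff]
  intro ε hε
  obtain ⟨M, hM⟩ := eventually_atTop.1
    (Metric.tendstoUniformlyOn_iff.1 hb0 (ε / (2 * C + 1)) (by positivity))
  have hlt : ∀ m ≥ M, ∀ n ≥ m, ∀ x ∈ S,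
      dist (∑ i ∈ range n, b i x • c i) (∑ i ∈ range m, b i x • c i) < ε := by
    intro m hm n hmn x hx
    have hbm : b m x * (2 * C + 1) < ε := by
      rw [← lt_div_iff₀ (by positivity)]
      simpa only [Pi.zero_apply, dist_zero_left, Real.norm_of_nonneg (hnonneg x hx m)]
        using hM m hm x hx
    rw [dist_eq_norm, ← sum_Ico_eq_sub _ hmn]
    calc _ ≤ 2 * C * b m x :=
          norm_sum_Ico_smul_le_of_antitone (hb x hx) (hnonneg x hx) hc m n
      _ < ε := by linarith [hnonneg x hx m]
  refine ⟨M, fun m hm n hn x hx => ?_⟩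
  rcases le_total m n with h | h
  · rw [dist_comm]
    exact hlt m hm n h x hx
  · exact hlt n hn m h x hx

end DirichletTest

section Mertens

lemma log_factorial_eq_sum_vonMangoldt (N : ℕ) :
    Real.log N ! = ∑ d ∈ Ioc 0 N, Λ d * ((N / d : ℕ) : ℝ) := by
  rw [← ArithmeticFunction.sum_Ioc_mul_zeta_eq_sum, ArithmeticFunction.vonMangoldt_mul_zeta,
    ← prod_Ico_id_eq_factorial, Nat.cast_prod,
    Real.log_prod fun n hn => Nat.cast_ne_zero.2 (Nat.one_le_iff_ne_zero.1 (mem_Ico.1 hn).1)]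
  rfl

lemma abs_mul_log_sub_log_factorial_le (N : ℕ) : |N * Real.log N - Real.log N !| ≤ N := by
  have hfac : (0 : ℝ) < N ! := by positivity
  have hupper : Real.log N ! ≤ N * Real.log N := by
    rw [← Real.log_pow]
    exact Real.log_le_log hfac (mod_cast Nat.factorial_le_pow N)
  have hlower : N * Real.log N - Real.log N ! ≤ N := by
    rcases N.eq_zero_or_pos with rfl | hN
    · simp
    · rw [← Real.log_pow, ← Real.log_div (by positivity) hfac.ne',
        Real.log_le_iff_le_exp (by positivity)]
      exact Real.pow_div_factorial_le_exp _ N.cast_nonneg N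
  rwa [abs_of_nonneg (sub_nonneg.2 hupper)]

lemma abs_mul_sum_vonMangoldt_div_sub_log_factorial_le (N : ℕ) :
    |N * ∑ d ∈ Ioc 0 N, Λ d / d - Real.log N !| ≤ ψ N := by
  rw [log_factorial_eq_sum_vonMangoldt, mul_sum, ← sum_sub_distrib, Chebyshev.psi,
    Nat.floor_natCast]
  refine (abs_sum_le_sum_abs _ _).trans (sum_le_sum fun d _ => ?_)
  have hfract : N * (Λ d / d) - Λ d * ((N / d : ℕ) : ℝ) = Λ d * Int.fract ((N : ℝ) / d) := by
    rw [Int.fract, ← natCast_floor_eq_intCast_floor (by positivity), Nat.floor_div_eq_div]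
    ring
  rw [hfract, abs_of_nonneg (mul_nonneg ArithmeticFunction.vonMangoldt_nonneg (Int.fract_nonneg _))]
  exact mul_le_of_le_one_right ArithmeticFunction.vonMangoldt_nonneg (Int.fract_lt_one _).le

theorem abs_sum_vonMangoldt_div_sub_log_le (N : ℕ) :
    |∑ d ∈ Ioc 0 N, Λ d / d - Real.log N| ≤ Real.log 4 + 5 := by
  rcases N.eq_zero_or_pos with rfl | hN
  · simpa using by positivity
  have hN0 : (0 : ℝ) < N := Nat.cast_pos.2 hN
  refine le_of_mul_le_mul_left ?_ hN0
  calc (N : ℝ) * |∑ d ∈ Ioc 0 N, Λ d / d - Real.log N|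
      = |(N * ∑ d ∈ Ioc 0 N, Λ d / d - Real.log N !) - (N * Real.log N - Real.log N !)| := by
        rw [sub_sub_sub_cancel_right, ← mul_sub, abs_mul, Nat.abs_cast]
    _ ≤ ψ N + N := (abs_sub _ _).trans (add_le_add
        (abs_mul_sum_vonMangoldt_div_sub_log_factorial_le N) (abs_mul_log_sub_log_factorial_le N))
    _ ≤ N * (Real.log 4 + 5) := by linarith [Chebyshev.psi_le_const_mul_self hN0.le]

lemma summable_vonMangoldt_div_of_not_prime :
    Summable fun n : ℕ => (if n.Prime then 0 else Λ n) / (n : ℝ) := by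
  refine (ArithmeticFunction.vonMangoldt.summable_residueClass_non_primes_div
    (q := 1) 0).congr fun n => ?_
  rw [ArithmeticFunction.vonMangoldt.residueClass,
    Set.indicator_of_mem (show n ∈ {n : ℕ | (n : ZMod 1) = 0} from Subsingleton.elim _ _)]

lemma sum_Ioc_vonMangoldt_div_eq (N : ℕ) :
    ∑ d ∈ Ioc 0 N, Λ d / d = ∑ p ∈ range (N + 1) with p.Prime, Real.log p / p +
      ∑ n ∈ range (N + 1), (if n.Prime then 0 else Λ n) / (n : ℝ) := by
  rw [sum_filter, ← sum_add_distrib, Nat.range_succ_eq_Icc_zero, ← sum_Ioc_add_eq_sum_Icc N.zero_le]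
  simp only [Nat.cast_zero, div_zero, ite_self, add_zero]
  refine sum_congr rfl fun n _ => ?_
  split_ifs with hn
  · rw [ArithmeticFunction.vonMangoldt_apply_prime hn, zero_div, add_zero]
  · rw [zero_add]

theorem exists_abs_sum_primes_log_div_sub_log_le :
    ∃ K : ℝ, ∀ N : ℕ, |∑ p ∈ range (N + 1) with p.Prime, Real.log p / p - Real.log N| ≤ K := by
  have hnonneg : ∀ n : ℕ, 0 ≤ (if n.Prime then 0 else Λ n) / (n : ℝ) := fun n => by
    have := @ArithmeticFunction.vonMangoldt_nonneg n
    positivity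
  refine ⟨Real.log 4 + 5 + ∑' n : ℕ, (if n.Prime then 0 else Λ n) / (n : ℝ), fun N => ?_⟩
  rw [eq_sub_of_add_eq (sum_Ioc_vonMangoldt_div_eq N).symm, sub_right_comm]
  refine (abs_sub _ _).trans (add_le_add (abs_sum_vonMangoldt_div_sub_log_le N) ?_)
  rw [abs_of_nonneg (sum_nonneg fun n _ => hnonneg n)]
  exact summable_vonMangoldt_div_of_not_prime.sum_le_tsum _ fun n _ => hnonneg n

end Mertens

section LinearTerm

variable {g : ℕ → ℂ} {κ : ℂ}

lemma CondA.exists_norm_sum_sub_mul_log_div_le (hA : CondA g κ) :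
    ∃ C : ℝ, ∀ N : ℕ, ‖∑ p ∈ range N with p.Prime, (g p - κ) * Real.log p / p‖ ≤ C := by
  obtain ⟨C, hC⟩ := hA
  obtain ⟨K, hK⟩ := exists_abs_sum_primes_log_div_sub_log_le
  have hC0 : 0 ≤ C := (norm_nonneg _).trans (hC 2 le_rfl)
  have hK0 : 0 ≤ K := (abs_nonneg _).trans (hK 0)
  refine ⟨C + ‖κ‖ * K, fun N => ?_⟩
  rcases le_or_gt N 2 with hN | hN
  · have hempty : (range N).filter Nat.Prime = ∅ := filter_eq_empty_iff.2 fun p hp hprime => by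
      have := hprime.two_le
      have := mem_range.1 hp
      omega
    simp only [hempty, sum_empty, norm_zero]
    positivity
  obtain ⟨m, rfl⟩ : ∃ m, N = m + 1 := ⟨N - 1, by omega⟩
  have hCm := hC m (mod_cast Nat.lt_succ_iff.1 hN)
  rw [primesLE, Nat.floor_natCast] at hCm
  have hsplit : ∑ p ∈ range (m + 1) with p.Prime, (g p - κ) * Real.log p / p =
      (∑ p ∈ range (m + 1) with p.Prime, g p * Real.log p / p - κ * Real.log m) -
        κ * ((∑ p ∈ range (m + 1) with p.Prime, Real.log p / p - Real.log m : ℝ) : ℂ) := by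
    push_cast
    rw [mul_sub, mul_sum, sub_sub_sub_cancel_right, ← sum_sub_distrib]
    exact sum_congr rfl fun p _ => by ring
  rw [hsplit]
  refine norm_sub_le_of_le hCm ?_
  rw [norm_mul, Complex.norm_real]
  exact mul_le_mul_of_nonneg_left (hK m) (norm_nonneg κ)

/-- The weights `n^{-s} / log n` of the partial summation, indexed from `n = 2` on because
`log 1 = 0`. -/
noncomputable def logWeight (n : ℕ) (s : ℝ) : ℝ :=
  ((n + 2 : ℕ) : ℝ) ^ (-s) / Real.log (n + 2 : ℕ)

lemma log_natCast_add_two_pos (n : ℕ) : 0 < Real.log (n + 2 : ℕ) :=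
  Real.log_pos (mod_cast (by omega : 1 < n + 2))

lemma antitone_logWeight {s : ℝ} (hs : 0 ≤ s) : Antitone (logWeight · s) := by
  intro m n hmn
  have hle : ((m + 2 : ℕ) : ℝ) ≤ (n + 2 : ℕ) := mod_cast Nat.add_le_add_right hmn 2
  refine div_le_div₀ (by positivity) ?_ (log_natCast_add_two_pos m)
    (Real.log_le_log (by positivity) hle)
  exact Real.rpow_le_rpow_of_nonpos (by positivity) hle (neg_nonpos.2 hs)

lemma continuous_logWeight (n : ℕ) : Continuous (logWeight n) :=
  ((Real.continuous_const_rpow (by positivity)).comp continuous_neg).div_const _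

lemma tendstoUniformlyOn_logWeight : TendstoUniformlyOn logWeight 0 atTop (Set.Ici 0) := by
  have hlim : Tendsto (fun n : ℕ => (Real.log (n + 2 : ℕ))⁻¹) atTop (𝓝 0) :=
    (Real.tendsto_log_atTop.comp
      (tendsto_natCast_atTop_atTop.comp (tendsto_add_atTop_nat 2))).inv_tendsto_atTop
  rw [Metric.tendstoUniformlyOn_iff]
  intro ε hε
  filter_upwards [hlim.eventually_lt_const hε] with n hn s hs
  have hlog := log_natCast_add_two_pos n
  rw [Pi.zero_apply, dist_zero_left, logWeight, Real.norm_of_nonneg (by positivity)]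
  refine lt_of_le_of_lt ?_ hn
  rw [inv_eq_one_div]
  gcongr
  exact Real.rpow_le_one_of_one_le_of_nonpos (mod_cast (by omega : 1 ≤ n + 2))
    (neg_nonpos.2 hs)

lemma sum_primes_range_add_two {M : Type*} [AddCommMonoid M] (f : ℕ → M) (N : ℕ) :
    ∑ p ∈ range (N + 2) with p.Prime, f p =
      ∑ n ∈ range N, if (n + 2).Prime then f (n + 2) else 0 := by
  rw [sum_filter, sum_range_succ', sum_range_succ', if_neg Nat.not_prime_zero,
    if_neg Nat.not_prime_one, add_zero, add_zero]

theorem CondA.hasContinuousLimitOn_sum (hA : CondA g κ) :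
    HasContinuousLimitOn (fun N (s : ℝ) => ∑ p ∈ range N with p.Prime,
      (g p - κ) * (((p : ℝ) ^ (-s - 1) : ℝ) : ℂ)) (Set.Ici 0) := by
  obtain ⟨C, hC⟩ := hA.exists_norm_sum_sub_mul_log_div_le
  set c : ℕ → ℂ := fun n =>
    if (n + 2).Prime then (g (n + 2) - κ) * Real.log (n + 2 : ℕ) / (n + 2 : ℕ) else 0 with hc
  have hbounded : ∀ N, ‖∑ n ∈ range N, c n‖ ≤ C := fun N => by
    rw [← sum_primes_range_add_two fun p => (g p - κ) * Real.log p / p]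
    exact hC (N + 2)
  obtain ⟨H, hHc, hH⟩ := HasContinuousLimitOn.of_uniformCauchySeqOn
    (uniformCauchySeqOn_sum_smul_of_antitone (fun _ => antitone_logWeight)
      tendstoUniformlyOn_logWeight hbounded)
    fun N => (continuous_finsetSum _ fun n _ =>
      (continuous_logWeight n).smul continuous_const).continuousOn
  refine ⟨H, hHc, fun s hs => (tendsto_add_atTop_iff_nat 2).1 ((hH s hs).congr fun N => ?_)⟩
  beta_reduce
  rw [sum_primes_range_add_two]
  refine sum_congr rfl fun n _ => ?_
  have hlog : (Real.log (n + 2 : ℕ) : ℂ) ≠ 0 := mod_cast (log_natCast_add_two_pos n).ne'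
  rw [hc, smul_ite, smul_zero, logWeight, Real.rpow_sub_one (by positivity), Complex.real_smul,
    Complex.ofReal_div, Complex.ofReal_div, Complex.ofReal_natCast]
  congr 1
  field_simp

end LinearTerm

section LocalFactor

lemma norm_log_one_sub_add_self_le {z : ℂ} (hz : ‖z‖ ≤ 1 / 2) :
    ‖Complex.log (1 - z) + z‖ ≤ ‖z‖ ^ 2 := by
  have hinv : (1 - ‖z‖)⁻¹ ≤ 2 := inv_le_of_inv_le₀ (by norm_num) (by linarith)
  have hlog := Complex.norm_log_one_add_sub_self_le (z := -z) (by rw [norm_neg]; linarith)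
  rw [sub_neg_eq_add, ← sub_eq_add_neg, norm_neg] at hlog
  calc ‖Complex.log (1 - z) + z‖ ≤ ‖z‖ ^ 2 * (1 - ‖z‖)⁻¹ / 2 := hlog
    _ ≤ ‖z‖ ^ 2 * 2 / 2 := by gcongr
    _ = ‖z‖ ^ 2 := by ring

lemma norm_one_sub_cpow_mul_exp_sub_one_le (κ : ℂ) {z : ℂ} (hz : ‖z‖ ≤ 1 / 2) :
    ‖(1 - z) ^ κ * Complex.exp (κ * z) - 1‖ ≤ ‖κ‖ * Real.exp ‖κ‖ * ‖z‖ ^ 2 := by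
  have hne : 1 - z ≠ 0 := by
    rw [sub_ne_zero]
    rintro rfl
    norm_num at hz
  set u := κ * (Complex.log (1 - z) + z) with hu
  have heq : (1 - z) ^ κ * Complex.exp (κ * z) = Complex.exp u := by
    rw [Complex.cpow_def_of_ne_zero hne, ← Complex.exp_add, hu]
    congr 1
    ring
  have hu_le : ‖u‖ ≤ ‖κ‖ * ‖z‖ ^ 2 := by
    rw [hu, norm_mul]
    exact mul_le_mul_of_nonneg_left (norm_log_one_sub_add_self_le hz) (norm_nonneg κ)
  have hu_le' : ‖u‖ ≤ ‖κ‖ :=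
    hu_le.trans (mul_le_of_le_one_right (norm_nonneg κ)
      (pow_le_one₀ (norm_nonneg z) (by linarith)))
  rw [heq]
  calc ‖Complex.exp u - 1‖ ≤ ‖u‖ * Real.exp ‖u‖ := by
        simpa using Complex.norm_exp_sub_sum_le_norm_mul_exp u 1
    _ ≤ ‖κ‖ * ‖z‖ ^ 2 * Real.exp ‖κ‖ := by gcongr
    _ = ‖κ‖ * Real.exp ‖κ‖ * ‖z‖ ^ 2 := by ring

lemma norm_exp_neg_mul_one_add_add_sub_one_le (w R : ℂ) :
    ‖Complex.exp (-w) * (1 + w + R) - 1‖ ≤ Real.exp ‖w‖ * (‖w‖ ^ 2 * Real.exp ‖w‖ + ‖R‖) := by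
  have hexp : ‖Complex.exp w - (1 + w)‖ ≤ ‖w‖ ^ 2 * Real.exp ‖w‖ := by
    simpa [sum_range_succ] using Complex.norm_exp_sub_sum_le_norm_mul_exp w 2
  have heq : Complex.exp (-w) * (1 + w + R) - 1 =
      Complex.exp (-w) * (R - (Complex.exp w - (1 + w))) := by
    have hinv : Complex.exp (-w) * Complex.exp w = 1 := by
      rw [← Complex.exp_add, neg_add_cancel, Complex.exp_zero]
    linear_combination hinv
  rw [heq, norm_mul, add_comm (‖w‖ ^ 2 * _)]
  refine mul_le_mul ?_ (norm_sub_le_of_le le_rfl hexp) (norm_nonneg _) (Real.exp_nonneg _)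
  simpa using Complex.norm_exp_le_exp_norm (-w)

variable {a : ℕ → ℂ} {ρ : ℝ}

lemma norm_mul_pow_le_of_norm_le {z : ℂ} (hz : ‖z‖ ≤ ρ) (r : ℕ) :
    ‖a r * z ^ r‖ ≤ ‖a r‖ * ρ ^ r := by
  rw [norm_mul, norm_pow]
  gcongr

lemma continuousOn_tsum_mul_pow (ha : Summable fun r => ‖a r‖ * ρ ^ r) :
    ContinuousOn (fun z : ℂ => ∑' r, a r * z ^ r) (Metric.closedBall 0 ρ) :=
  continuousOn_tsum (fun r => by fun_prop) ha fun r _ hz =>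
    norm_mul_pow_le_of_norm_le (mem_closedBall_zero_iff.1 hz) r

lemma norm_exp_neg_mul_tsum_sub_one_le (ha0 : a 0 = 1) (ha : Summable fun r => ‖a r‖ * ρ ^ r)
    {z : ℂ} (hz : ‖z‖ ≤ ρ) :
    ‖Complex.exp (-(a 1 * z)) * ∑' r, a r * z ^ r - 1‖ ≤
      Real.exp (‖a 1‖ * ρ) * ((‖a 1‖ * ρ) ^ 2 * Real.exp (‖a 1‖ * ρ) +
        ∑' r, ‖a (r + 2)‖ * ρ ^ (r + 2)) := by
  have hsummable : Summable fun r => a r * z ^ r :=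
    .of_norm_bounded ha (norm_mul_pow_le_of_norm_le hz)
  have htail : ‖∑' r, a (r + 2) * z ^ (r + 2)‖ ≤ ∑' r, ‖a (r + 2)‖ * ρ ^ (r + 2) :=
    tsum_of_norm_bounded ((summable_nat_add_iff 2).2 ha).hasSum
      fun r => norm_mul_pow_le_of_norm_le hz (r + 2)
  have hlinear : ‖a 1 * z‖ ≤ ‖a 1‖ * ρ := by simpa using norm_mul_pow_le_of_norm_le (a := a) hz 1
  have hsplit : ∑' r, a r * z ^ r = 1 + a 1 * z + ∑' r, a (r + 2) * z ^ (r + 2) := by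
    rw [← hsummable.sum_add_tsum_nat_add 2]
    simp [sum_range_succ, ha0]
  rw [hsplit]
  refine (norm_exp_neg_mul_one_add_add_sub_one_le _ _).trans ?_
  gcongr

end LocalFactor

section EulerProduct

variable {g : ℕ → ℂ} {κ : ℂ}

lemma norm_ofReal_rpow_neg_sub_one_le {p : ℕ} (hp : p.Prime) {s : ℝ} (hs : 0 ≤ s) :
    ‖(((p : ℝ) ^ (-s - 1) : ℝ) : ℂ)‖ ≤ (p : ℝ)⁻¹ := by
  rw [Complex.norm_real, Real.norm_of_nonneg (by positivity), ← Real.rpow_neg_one]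
  exact Real.rpow_le_rpow_of_exponent_le (mod_cast hp.one_le) (by linarith)

lemma continuous_ofReal_rpow_neg_sub_one {p : ℕ} (hp : p.Prime) :
    Continuous fun s : ℝ => (((p : ℝ) ^ (-s - 1) : ℝ) : ℂ) :=
  Complex.continuous_ofReal.comp
    ((Real.continuous_const_rpow (mod_cast hp.ne_zero)).comp (by fun_prop))

lemma eulerFactorS_eq_mul_exp (g : ℕ → ℂ) (κ : ℂ) (s : ℝ) (p : ℕ) :
    eulerFactorS g κ s p =
      (1 - (((p : ℝ) ^ (-s - 1) : ℝ) : ℂ)) ^ κ *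
        Complex.exp (κ * (((p : ℝ) ^ (-s - 1) : ℝ) : ℂ)) *
      (Complex.exp (-(g p * (((p : ℝ) ^ (-s - 1) : ℝ) : ℂ))) *
        ∑' r, g (p ^ r) * (((p : ℝ) ^ (-s - 1) : ℝ) : ℂ) ^ r) *
      Complex.exp ((g p - κ) * (((p : ℝ) ^ (-s - 1) : ℝ) : ℂ)) := by
  have hinv : (p : ℝ) ^ (s + 1) = ((p : ℝ) ^ (-s - 1))⁻¹ := by
    rw [← Real.rpow_neg p.cast_nonneg]
    congr 1
    ring
  simp only [eulerFactorS, hinv, inv_pow, Complex.ofReal_inv, Complex.ofReal_pow, div_inv_eq_mul]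
  set z : ℂ := (((p : ℝ) ^ (-s - 1) : ℝ) : ℂ)
  have hexp : Complex.exp (κ * z) * Complex.exp (-(g p * z)) * Complex.exp ((g p - κ) * z) = 1 := by
    rw [← Complex.exp_add, ← Complex.exp_add, ← Complex.exp_zero]
    congr 1
    ring
  linear_combination -((1 - z) ^ κ * ∑' r, g (p ^ r) * z ^ r) * hexp

theorem hasContinuousLimitOn_prod_one_sub_cpow_mul_exp (κ : ℂ) :
    HasContinuousLimitOn (fun N (s : ℝ) => ∏ p ∈ range N with p.Prime,
      ((1 - (((p : ℝ) ^ (-s - 1) : ℝ) : ℂ)) ^ κ *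
        Complex.exp (κ * (((p : ℝ) ^ (-s - 1) : ℝ) : ℂ)))) (Set.Ici 0) := by
  have hhalf : ∀ {p : ℕ}, p.Prime → ∀ {s : ℝ}, 0 ≤ s →
      ‖(((p : ℝ) ^ (-s - 1) : ℝ) : ℂ)‖ ≤ 1 / 2 := fun hp _ hs =>
    (norm_ofReal_rpow_neg_sub_one_le hp hs).trans
      (by rw [one_div]; exact inv_anti₀ two_pos (mod_cast hp.two_le))
  have hsummable : Summable fun p : Nat.Primes => ‖κ‖ * Real.exp ‖κ‖ * ((p : ℕ) : ℝ)⁻¹ ^ 2 := by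
    have : Summable fun n : ℕ => (n : ℝ)⁻¹ ^ 2 := by simp
    exact (this.comp_injective Subtype.val_injective).mul_left _
  refine .prod_primes (u := fun p => ‖κ‖ * Real.exp ‖κ‖ * (p : ℝ)⁻¹ ^ 2) hsummable
    (fun p hp => ?_) fun p hp s hs => ?_
  · have hz := (continuous_ofReal_rpow_neg_sub_one hp).continuousOn (s := Set.Ici 0)
    refine ((continuousOn_const.sub hz).cpow continuousOn_const fun s hs => ?_).mul
      (continuousOn_const.mul hz).cexp
    refine Complex.mem_slitPlane_of_norm_lt_one (z := -_) ?_
    rw [norm_neg]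
    linarith [hhalf hp hs]
  · refine (norm_one_sub_cpow_mul_exp_sub_one_le κ (hhalf hp hs)).trans ?_
    gcongr
    exact norm_ofReal_rpow_neg_sub_one_le hp hs

theorem hasContinuousLimitOn_prod_exp_neg_mul_tsum (hg : g 1 = 1)
    (hsq : Summable fun p : Nat.Primes => (‖g p‖ / (p : ℕ)) ^ 2)
    (hpow : Summable fun q : Nat.Primes × ℕ => ‖g (q.1 ^ (q.2 + 2))‖ / (q.1 : ℕ) ^ (q.2 + 2)) :
    HasContinuousLimitOn (fun N (s : ℝ) => ∏ p ∈ range N with p.Prime,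
      (Complex.exp (-(g p * (((p : ℝ) ^ (-s - 1) : ℝ) : ℂ))) *
        ∑' r, g (p ^ r) * (((p : ℝ) ^ (-s - 1) : ℝ) : ℂ) ^ r)) (Set.Ici 0) := by
  simp only [div_eq_mul_inv, ← inv_pow] at hsq hpow
  obtain ⟨M, hM⟩ : ∃ M, ∀ p : Nat.Primes, ‖g p‖ * ((p : ℕ) : ℝ)⁻¹ ≤ M := by
    refine ⟨1 + ∑' p : Nat.Primes, (‖g p‖ * ((p : ℕ) : ℝ)⁻¹) ^ 2, fun p => ?_⟩
    have := hsq.le_tsum p fun _ _ => by positivity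
    nlinarith [sq_nonneg (‖g p‖ * ((p : ℕ) : ℝ)⁻¹ - 1)]
  have hlocal : ∀ p, p.Prime → Summable fun r => ‖g (p ^ r)‖ * (p : ℝ)⁻¹ ^ r := fun p hp =>
    (summable_nat_add_iff 2).1 (hpow.prod_factor ⟨p, hp⟩)
  refine .prod_primes (u := fun p => Real.exp M * ((‖g p‖ * (p : ℝ)⁻¹) ^ 2 * Real.exp M +
    ∑' r, ‖g (p ^ (r + 2))‖ * (p : ℝ)⁻¹ ^ (r + 2)))
    (((hsq.mul_right _).add hpow.prod).mul_left _) (fun p hp => ?_) fun p hp s hs => ?_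
  · have hz := (continuous_ofReal_rpow_neg_sub_one hp).continuousOn (s := Set.Ici 0)
    refine (continuousOn_const.mul hz).neg.cexp.mul
      ((continuousOn_tsum_mul_pow (hlocal p hp)).comp hz fun s hs => ?_)
    exact mem_closedBall_zero_iff.2 (norm_ofReal_rpow_neg_sub_one_le hp hs)
  · have hlin := hM ⟨p, hp⟩
    have hbound := norm_exp_neg_mul_tsum_sub_one_le (a := fun r => g (p ^ r)) (by simpa using hg)
      (hlocal p hp) (norm_ofReal_rpow_neg_sub_one_le hp hs)
    simp only [pow_one] at hbound
    refine hbound.trans ?_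
    gcongr

end EulerProduct

section CondB

variable {g : ℕ → ℂ}

lemma summable_of_ofReal_mul_le {ι : Type*} {f : ι → ℝ} {F : ι → ℝ≥0∞} {c : ℝ} (hc : 0 < c)
    (hf : ∀ i, 0 ≤ f i) (hF : ∑' i, F i ≠ ⊤) (h : ∀ i, ENNReal.ofReal (c * f i) ≤ F i) :
    Summable f := by
  have hsum := ENNReal.summable_toReal (ne_top_of_le_ne_top hF (ENNReal.tsum_le_tsum h))
  simp only [fun i => ENNReal.toReal_ofReal (mul_nonneg hc.le (hf i))] at hsum
  exact (summable_mul_left_iff hc.ne').1 hsum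

lemma nnnorm_div_natCast_eq_ofReal (x : ℂ) {n : ℕ} (hn : 0 < n) :
    (‖x‖₊ : ℝ≥0∞) / n = ENNReal.ofReal (‖x‖ / n) := by
  rw [ENNReal.ofReal_div_of_pos (Nat.cast_pos.2 hn), ENNReal.ofReal_natCast, ofReal_norm]
  rfl

lemma ofReal_log_two_mul_le (x : ℂ) {n : ℕ} (hn : 2 ≤ n) :
    ENNReal.ofReal (Real.log 2 * (‖x‖ / n)) ≤
      (‖x‖₊ : ℝ≥0∞) * ENNReal.ofReal (Real.log n) / n := by
  rw [ENNReal.ofReal_mul (Real.log_nonneg one_le_two), mul_comm (‖x‖₊ : ℝ≥0∞), mul_div_assoc,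
    nnnorm_div_natCast_eq_ofReal x (by omega)]
  gcongr
  exact mod_cast hn

lemma CondB.summable_sq (hB : CondB g) :
    Summable fun p : Nat.Primes => (‖g p‖ / (p : ℕ)) ^ 2 := by
  refine summable_of_ofReal_mul_le (Real.log_pos one_lt_two) (fun p => by positivity)
    (ENNReal.add_lt_top.1 hB).1.ne fun p => ?_
  rw [sq, ← mul_assoc, ENNReal.ofReal_mul (by positivity),
    ← nnnorm_div_natCast_eq_ofReal _ p.2.pos]
  refine mul_le_mul' (ofReal_log_two_mul_le _ p.2.two_le) ?_
  simpa using ENNReal.le_tsum (f := fun r : ℕ =>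
    (‖g ((p : ℕ) ^ (r + 1))‖₊ : ℝ≥0∞) / (((p : ℕ) ^ (r + 1) : ℕ) : ℝ≥0∞)) 0

lemma CondB.summable_prime_pow_add_two (hB : CondB g) :
    Summable fun q : Nat.Primes × ℕ => ‖g (q.1 ^ (q.2 + 2))‖ / (q.1 : ℕ) ^ (q.2 + 2) := by
  refine summable_of_ofReal_mul_le (Real.log_pos one_lt_two) (fun q => by positivity)
    (ENNReal.tsum_prod.trans_ne (ENNReal.add_lt_top.1 hB).2.ne) fun q => ?_
  have htwo : 2 ≤ (q.1 : ℕ) ^ (q.2 + 2) :=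
    q.1.2.two_le.trans (Nat.le_self_pow (by omega) _)
  exact mod_cast ofReal_log_two_mul_le (g (q.1 ^ (q.2 + 2))) htwo

end CondB

theorem stmt17_general {g : ℕ → ℂ} {κ : ℂ} (hg : g 1 = 1) (hA : CondA g κ)
    (hsq : Summable fun p : Nat.Primes => (‖g p‖ / (p : ℕ)) ^ 2)
    (hpow : Summable fun q : Nat.Primes × ℕ => ‖g (q.1 ^ (q.2 + 2))‖ / (q.1 : ℕ) ^ (q.2 + 2)) :
    HasContinuousLimitOn (fun N s => ∏ p ∈ range N with p.Prime, eulerFactorS g κ s p)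
      (Set.Ici 0) := by
  simpa only [eulerFactorS_eq_mul_exp, prod_mul_distrib, Complex.exp_sum] using
    ((hasContinuousLimitOn_prod_one_sub_cpow_mul_exp κ).mul
      (hasContinuousLimitOn_prod_exp_neg_mul_tsum hg hsq hpow)).mul hA.hasContinuousLimitOn_sum.cexp

theorem stmt17 (g : ℕ → ℂ) (κ : ℂ) (hg : IsMult g)
    (hA : CondA g κ) (hB : CondB g) :
    (∀ s : ℝ, 0 ≤ s → ∃ P : ℂ,
        Tendsto (fun N : ℕ => ∏ p ∈ (Finset.range N).filter Nat.Prime, eulerFactorS g κ s p)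
          atTop (nhds P)) ∧
    ∀ P : ℝ → ℂ,
      (∀ s : ℝ, 0 ≤ s →
        Tendsto (fun N : ℕ => ∏ p ∈ (Finset.range N).filter Nat.Prime, eulerFactorS g κ s p)
          atTop (nhds (P s))) →
      Tendsto P (nhdsWithin 0 (Set.Ioi 0)) (nhds (P 0)) := by
  have h := stmt17_general hg.1 hA hB.summable_sq hB.summable_prime_pow_add_two
  exact ⟨fun _ => h.exists_tendsto, fun _ hP =>
    (h.continuousOn_of_tendsto hP 0 Set.self_mem_Ici).mono Set.Ioi_subset_Ici_self⟩
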